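/- Let (M,g) be a Riemannian manifold with embedded boundary hypersurface, Σ an open subset of ∂M, and h a symmetric (0,2)-tensor such that h and g are analytic in coordinate charts containing the analytic hypersurface Σ. Then there is an analytic vector field X in a collar neighborhood of Σ with X = 0 on Σ and (L_X g)(ν,·) = h(ν,·), where ν is the parallel extension of the unit normal to Σ. -/

import Mathlib

noncomputable section

open scoped BigOperators
open MeasureTheory Filter

/-- Points of the coordinate chart `ℝⁿ`. -/
abbrev Pt (n : ℕ) := Fin n → ℝ

/-- Partial derivative of a scalar function in the `i`-th coordinate direction. -/
def pd {n : ℕ} (i : Fin n) (f : Pt n → ℝ) (x : Pt n) : ℝ :=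
  fderiv ℝ f x (Pi.single i 1)

/-- Inverse metric `g^{ij}` (pointwise matrix inverse). -/
def ginv {n : ℕ} (g : Pt n → Fin n → Fin n → ℝ) (x : Pt n) (i j : Fin n) : ℝ :=
  (Matrix.of (g x))⁻¹ i j

/-- Christoffel symbols `Γ^k_{ij}` of the metric `g`. -/
def chr {n : ℕ} (g : Pt n → Fin n → Fin n → ℝ) (x : Pt n) (k i j : Fin n) : ℝ :=
  (1/2) * ∑ l, ginv g x k l *
    (pd i (fun y => g y j l) x + pd j (fun y => g y i l) x - pd l (fun y => g y i j) x)

/-- Covariant derivative of a covector field: `X_{i;j}`. -/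
def cdCov {n : ℕ} (g : Pt n → Fin n → Fin n → ℝ) (X : Pt n → Fin n → ℝ)
    (x : Pt n) (i j : Fin n) : ℝ :=
  pd j (fun y => X y i) x - ∑ k, chr g x k i j * X x k

/-- Covariant derivative of a vector field: `X^i_{;j}`. -/
def cdVec {n : ℕ} (g : Pt n → Fin n → Fin n → ℝ) (X : Pt n → Fin n → ℝ)
    (x : Pt n) (i j : Fin n) : ℝ :=
  pd j (fun y => X y i) x + ∑ k, chr g x i k j * X x k

/-- Covariant derivative of a symmetric (0,2)-tensor: `h_{ij;k}`. -/
def cd2 {n : ℕ} (g : Pt n → Fin n → Fin n → ℝ) (h : Pt n → Fin n → Fin n → ℝ)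
    (x : Pt n) (i j k : Fin n) : ℝ :=
  pd k (fun y => h y i j) x - ∑ l, chr g x l i k * h x l j - ∑ l, chr g x l j k * h x i l

/-- Second covariant derivative of a covector field: `X_{i;jk}`. -/
def cdCov2 {n : ℕ} (g : Pt n → Fin n → Fin n → ℝ) (X : Pt n → Fin n → ℝ)
    (x : Pt n) (i j k : Fin n) : ℝ :=
  cd2 g (fun y a b => cdCov g X y a b) x i j k

/-- Riemann curvature tensor `R^l_{ijk}`. -/
def riem {n : ℕ} (g : Pt n → Fin n → Fin n → ℝ) (x : Pt n) (l i j k : Fin n) : ℝ :=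
  pd j (fun y => chr g y l i k) x - pd k (fun y => chr g y l i j) x
  + ∑ m, chr g x l m j * chr g x m i k - ∑ m, chr g x l m k * chr g x m i j

/-- Riemann curvature with all indices lowered. -/
def riemLow {n : ℕ} (g : Pt n → Fin n → Fin n → ℝ) (x : Pt n) (a b c d : Fin n) : ℝ :=
  ∑ l, g x a l * riem g x l b c d

/-- Ricci curvature `R_{ij}`. -/
def ric {n : ℕ} (g : Pt n → Fin n → Fin n → ℝ) (x : Pt n) (i j : Fin n) : ℝ :=
  ∑ l, riem g x l i l j

/-- Lower the index of a vector field using `g`. -/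
def lowerV {n : ℕ} (g : Pt n → Fin n → Fin n → ℝ) (X : Pt n → Fin n → ℝ)
    (x : Pt n) (i : Fin n) : ℝ :=
  ∑ j, g x i j * X x j

/-- Lie derivative of the metric `g` along the vector field `X`:
`(L_X g)_{ij} = X_{i;j} + X_{j;i}` (index lowered by `g`). -/
def lieg {n : ℕ} (g : Pt n → Fin n → Fin n → ℝ) (X : Pt n → Fin n → ℝ)
    (x : Pt n) (i j : Fin n) : ℝ :=
  cdCov g (lowerV g X) x i j + cdCov g (lowerV g X) x j i

/-- Hessian `f_{;ij}`. -/
def hess {n : ℕ} (g : Pt n → Fin n → Fin n → ℝ) (f : Pt n → ℝ)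
    (x : Pt n) (i j : Fin n) : ℝ :=
  cdCov g (fun y a => pd a f y) x i j

/-- Laplace–Beltrami operator on functions. -/
def lapf {n : ℕ} (g : Pt n → Fin n → Fin n → ℝ) (f : Pt n → ℝ) (x : Pt n) : ℝ :=
  ∑ i, ∑ j, ginv g x i j * hess g f x i j

/-- Trace of a (0,2)-tensor with respect to `g`. -/
def trT {n : ℕ} (g : Pt n → Fin n → Fin n → ℝ) (h : Pt n → Fin n → Fin n → ℝ)
    (x : Pt n) : ℝ :=
  ∑ i, ∑ j, ginv g x i j * h x i j

/-- Divergence of a (0,2)-tensor, as a covector. -/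
def divT {n : ℕ} (g : Pt n → Fin n → Fin n → ℝ) (h : Pt n → Fin n → Fin n → ℝ)
    (x : Pt n) (i : Fin n) : ℝ :=
  ∑ j, ∑ k, ginv g x j k * cd2 g h x i j k

/-- Bianchi operator `β_g h = -div_g h + (1/2) d (tr_g h)`. -/
def bianchi {n : ℕ} (g : Pt n → Fin n → Fin n → ℝ) (h : Pt n → Fin n → Fin n → ℝ)
    (x : Pt n) (i : Fin n) : ℝ :=
  -divT g h x i + (1/2) * pd i (fun y => trT g h y) x

/-- Gradient vector field `(∇f)^i`. -/
def gradV {n : ℕ} (g : Pt n → Fin n → Fin n → ℝ) (f : Pt n → ℝ)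
    (x : Pt n) (i : Fin n) : ℝ :=
  ∑ j, ginv g x i j * pd j f x

/-- The tensor is symmetric. -/
def symT {n : ℕ} (g : Pt n → Fin n → Fin n → ℝ) : Prop :=
  ∀ x i j, g x i j = g x j i

/-- `g` is pointwise positive definite. -/
def posdef {n : ℕ} (g : Pt n → Fin n → Fin n → ℝ) : Prop :=
  ∀ (x : Pt n) (v : Fin n → ℝ), v ≠ 0 → 0 < ∑ i, ∑ j, g x i j * v i * v j

/-- Smooth componentwise. -/
def smoothT {n : ℕ} (g : Pt n → Fin n → Fin n → ℝ) : Prop :=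
  ∀ i j, ContDiff ℝ (⊤ : ℕ∞) (fun x => g x i j)

/-- The lowered tensor `(T_h)_{ijk} = (1/2)(h_{ij;k} + h_{ik;j} - h_{jk;i})`. -/
def Tlow {n : ℕ} (g : Pt n → Fin n → Fin n → ℝ) (h : Pt n → Fin n → Fin n → ℝ)
    (x : Pt n) (i j k : Fin n) : ℝ :=
  (1/2) * (cd2 g h x i j k + cd2 g h x i k j - cd2 g h x j k i)
/-- Unit normal vector to the level set `{f = 0}` (normalized `g`-gradient of `f`). -/
def nuV {n : ℕ} (g : Pt n → Fin n → Fin n → ℝ) (f : Pt n → ℝ)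
    (x : Pt n) (i : Fin n) : ℝ :=
  gradV g f x i / Real.sqrt (∑ j, ∑ k, ginv g x j k * pd j f x * pd k f x)

/-- Ambient second fundamental form of the level set `{f = 0}`:
symmetrized covariant derivative of the lowered unit normal. -/
def sff {n : ℕ} (g : Pt n → Fin n → Fin n → ℝ) (f : Pt n → ℝ)
    (x : Pt n) (i j : Fin n) : ℝ :=
  (1/2) * (cdCov g (lowerV g (nuV g f)) x i j + cdCov g (lowerV g (nuV g f)) x j i)

/-- Mean curvature of the level set `{f = 0}` (divergence of the unit normal). -/
def hmean {n : ℕ} (g : Pt n → Fin n → Fin n → ℝ) (f : Pt n → ℝ) (x : Pt n) : ℝ :=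
  ∑ i, ∑ j, ginv g x i j * cdCov g (lowerV g (nuV g f)) x i j

/-- The perturbed metric `g + s h`. -/
def mpert {n : ℕ} (g h : Pt n → Fin n → Fin n → ℝ) (s : ℝ) :
    Pt n → Fin n → Fin n → ℝ :=
  fun y a b => g y a b + s * h y a b

/-- Linearized mean curvature `H'|_g(h)`. -/
def hmeanLin {n : ℕ} (g h : Pt n → Fin n → Fin n → ℝ) (f : Pt n → ℝ) (x : Pt n) : ℝ :=
  deriv (fun s : ℝ => hmean (mpert g h s) f x) 0

/-- Linearized second fundamental form `A'|_g(h)`. -/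
def sffLin {n : ℕ} (g h : Pt n → Fin n → Fin n → ℝ) (f : Pt n → ℝ)
    (x : Pt n) (i j : Fin n) : ℝ :=
  deriv (fun s : ℝ => sff (mpert g h s) f x i j) 0

/-- Linearized unit normal `ν'|_g(h)` (a vector field along the level set). -/
def nuLin {n : ℕ} (g h : Pt n → Fin n → Fin n → ℝ) (f : Pt n → ℝ)
    (x : Pt n) (i : Fin n) : ℝ :=
  deriv (fun s : ℝ => nuV (mpert g h s) f x i) 0

/-- Linearized Ricci curvature `Ric'|_g(h)`. -/
def ricLin {n : ℕ} (g h : Pt n → Fin n → Fin n → ℝ) (x : Pt n) (i j : Fin n) : ℝ :=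
  deriv (fun s : ℝ => ric (mpert g h s) x i j) 0

/-- A vector `v` is tangent to the level set `{f = 0}` at `x`. -/
def Tang {n : ℕ} (f : Pt n → ℝ) (x : Pt n) (v : Fin n → ℝ) : Prop :=
  fderiv ℝ f x v = 0

/-!
Let `ξ` be the covector field dual to `X` and `θ = h(ν, ·)`. The equation to be solved is
`(∇_ν ξ)(w) + (∇_w ξ)(ν) = θ(w)` for all `w`. Taking `w = ν` and using `∇_ν ν = 0` shows that
`u = ξ(ν)` must satisfy the scalar equation `D_ν u = θ(ν) / 2`. Once `u` is known, Leibniz' rule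
turns `(∇_w ξ)(ν)` into `D_w u` minus terms of order zero in `ξ`, so the full equation becomes a
transport equation `D_ν ξ = B(x, ξ)`. Conversely, if `ξ` solves the latter, then `ξ(ν)` solves the
scalar equation because `∇_ν ν = 0`, and hence equals `u` by uniqueness.

Both equations are analytic Cauchy problems with zero data on a hypersurface transversal to `ν`, and
are solved by characteristics. The flow of an analytic vector field is analytic: with time rescaled
to `[-1, 1]`, Picard's equation `c = x + t ∫ V(c)` is analytic on the Banach space of continuous
paths, so the implicit function theorem yields `c` as an analytic function of `(x, t)`. Uniqueness
makes the local solutions agree near the hypersurface, where they are glued.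
-/

section

open scoped Topology ContDiff

section Superposition

lemma continuousMap_update_apply {ι I E : Type*} [DecidableEq ι] [TopologicalSpace I]
    [TopologicalSpace E] (c : ι → C(I, E)) (i : ι) (d : C(I, E)) (s : I) :
    (fun j => Function.update c i d j s) = Function.update (fun j => c j s) i (d s) :=
  funext fun j => Function.apply_update (fun _ (e : C(I, E)) => e s) c i d j

variable {𝕜 I E F : Type*} [NontriviallyNormedField 𝕜] [TopologicalSpace I] [CompactSpace I]
  [NormedAddCommGroup E] [NormedSpace 𝕜 E] [NormedAddCommGroup F] [NormedSpace 𝕜 F]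

/-- The pointwise action `c ↦ (s ↦ q (c₁ s, …, c_k s))` of a multilinear map on continuous
functions, the building block of the power series of a superposition operator. -/
def pointwiseMultilinear {k : ℕ} (q : ContinuousMultilinearMap 𝕜 (fun _ : Fin k => E) F) :
    ContinuousMultilinearMap 𝕜 (fun _ : Fin k => C(I, E)) C(I, F) :=
  MultilinearMap.mkContinuous
    { toFun := fun c => ⟨fun s => q fun i => c i s,
        q.cont.comp (continuous_pi fun i => (c i).continuous)⟩
      map_update_add' := fun c i a b => by
        ext s
        simp [continuousMap_update_apply]
      map_update_smul' := fun c i a b => by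
        ext s
        simp [continuousMap_update_apply] }
    ‖q‖ fun c => by
      refine (ContinuousMap.norm_le _ (by positivity)).2 fun s => (q.le_opNorm _).trans ?_
      gcongr with i
      exact (c i).norm_coe_le_norm s

lemma norm_pointwiseMultilinear_le {k : ℕ}
    (q : ContinuousMultilinearMap 𝕜 (fun _ : Fin k => E) F) :
    ‖pointwiseMultilinear (I := I) q‖ ≤ ‖q‖ :=
  MultilinearMap.mkContinuous_norm_le _ (norm_nonneg _) _

theorem exists_analyticAt_superposition [CompleteSpace F] {V : E → F} {p : E}
    (hV : AnalyticAt 𝕜 V p) :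
    ∃ N : C(I, E) → C(I, F), AnalyticAt 𝕜 N (ContinuousMap.const I p) ∧
      ∀ᶠ c in 𝓝 (ContinuousMap.const I p), ∀ s, N c s = V (c s) := by
  obtain ⟨q, r, hq⟩ := hV
  let P : FormalMultilinearSeries 𝕜 C(I, E) C(I, F) := fun k => pointwiseMultilinear (q k)
  have radius_le : q.radius ≤ P.radius := by
    refine ENNReal.le_of_forall_nnreal_lt fun t ht => ?_
    obtain ⟨C, -, hC⟩ := q.norm_mul_pow_le_of_lt_radius ht
    refine P.le_radius_of_bound C fun k => le_trans ?_ (hC k)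
    gcongr
    exact norm_pointwiseMultilinear_le (q k)
  have r_le : r ≤ P.radius := hq.r_le.trans radius_le
  have hP := P.hasFPowerSeriesOnBall (hq.r_pos.trans_le r_le)
  have hP_sub := hP.comp_sub (ContinuousMap.const I p)
  rw [zero_add] at hP_sub
  refine ⟨fun c => P.sum (c - ContinuousMap.const I p), hP_sub.analyticAt, ?_⟩
  filter_upwards [Metric.eball_mem_nhds (ContinuousMap.const I p) hq.r_pos] with c hc s
  have c_mem : c - ContinuousMap.const I p ∈ Metric.eball (0 : C(I, E)) r := by
    simpa [edist_eq_enorm_sub] using hc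
  have cs_mem : c s - p ∈ Metric.eball (0 : E) r := by
    simp only [Metric.mem_eball, edist_zero_right] at c_mem ⊢
    refine lt_of_le_of_lt (enorm_le_iff_norm_le.2 ?_) c_mem
    exact (c - ContinuousMap.const I p).norm_coe_le_norm s
  have sum_N := (hP.hasSum (Metric.eball_subset_eball r_le c_mem)).map
    (ContinuousMap.evalCLM 𝕜 s) (ContinuousMap.evalCLM 𝕜 s).continuous
  have sum_V := hq.hasSum cs_mem
  rw [zero_add] at sum_N
  rw [add_sub_cancel] at sum_V
  exact sum_N.unique sum_V

end Superposition

lemma fderiv_comp_inr_eq {𝕜 E F G : Type*} [NontriviallyNormedField 𝕜] [NormedAddCommGroup E]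
    [NormedSpace 𝕜 E] [NormedAddCommGroup F] [NormedSpace 𝕜 F] [NormedAddCommGroup G]
    [NormedSpace 𝕜 G] {Ψ : E × F → G} {a : E} {b : F} (hΨ : DifferentiableAt 𝕜 Ψ (a, b)) :
    fderiv 𝕜 Ψ (a, b) ∘L .inr 𝕜 E F = fderiv 𝕜 (fun y => Ψ (a, y)) b :=
  (hΨ.hasFDerivAt.comp b (hasFDerivAt_prodMk_right a b)).fderiv.symm

section LocalFlow

variable {X E : Type*} [TopologicalSpace X] [NormedAddCommGroup E]

/-- The time interval `[-1, 1]`, on which integral curves are sought after rescaling time. -/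
abbrev UnitTime := Set.Icc (-1 : ℝ) 1

/-- Extension of a path from `[-1, 1]` to `ℝ`, constant on either side of the interval. -/
def extendPath (c : C(UnitTime, X)) : C(ℝ, X) :=
  ContinuousMap.IccExtend (by norm_num) c

lemma extendPath_coe (c : C(UnitTime, X)) (s : UnitTime) :
    extendPath c s = c s :=
  Set.IccExtend_val _ c s

lemma intervalIntegrable_extendPath (c : C(UnitTime, E)) (a b : ℝ) :
    IntervalIntegrable (extendPath c) volume a b :=
  (extendPath c).continuous.intervalIntegrable a b

/-- The path `r ↦ c (s r)`. -/
def rescalePath (s : UnitTime) (c : C(UnitTime, X)) : C(UnitTime, X) :=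
  c.comp ⟨fun r => ⟨s * r, abs_le.1 <| by
    rw [abs_mul]
    exact mul_le_one₀ (abs_le.2 s.2) (abs_nonneg _) (abs_le.2 r.2)⟩, by fun_prop⟩

lemma rescalePath_one (s : UnitTime) (c : C(UnitTime, X)) :
    rescalePath s c ⟨1, by norm_num⟩ = extendPath c s :=
  (congrArg c (Subtype.ext (mul_one (s : ℝ)))).trans (extendPath_coe c s).symm

variable [NormedSpace ℝ E]

/-- The primitive `c ↦ ∫₀ˢ c`, as an operator on continuous paths. -/
def pathPrimitive (E : Type*) [NormedAddCommGroup E] [NormedSpace ℝ E] :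
    C(UnitTime, E) →L[ℝ] C(UnitTime, E) :=
  LinearMap.mkContinuous
    { toFun := fun c => ⟨fun s => ∫ r in (0 : ℝ)..s, extendPath c r,
        (intervalIntegral.continuous_primitive (intervalIntegrable_extendPath c) 0).comp
          continuous_subtype_val⟩
      map_add' := fun c d => by
        ext s
        exact intervalIntegral.integral_add (intervalIntegrable_extendPath c 0 s)
          (intervalIntegrable_extendPath d 0 s)
      map_smul' := fun a c => by
        ext s
        exact intervalIntegral.integral_smul a (extendPath c) }
    1 fun c => by
      have norm_extendPath_le (r : ℝ) : ‖extendPath c r‖ ≤ ‖c‖ := c.norm_coe_le_norm _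
      refine (ContinuousMap.norm_le _ (by positivity)).2 fun s =>
        (intervalIntegral.norm_integral_le_of_norm_le_const
          fun r _ => norm_extendPath_le r).trans ?_
      rw [sub_zero, mul_comm]
      exact mul_le_mul_of_nonneg_right (abs_le.2 s.2) (norm_nonneg c)

/-- `c` solves the Picard equation `c(s) = x + t ∫₀ˢ V(c)`, that is, it is an integral curve of
`t • V` through `x`. The time parameter `t` is moved into the equation so that all paths live on
the same interval and the implicit function theorem applies. -/
def IsPicardPath (V : E → E) (x : E) (t : ℝ) (c : C(UnitTime, E)) : Prop :=
  ∀ s : UnitTime, c s = x + t • ∫ r in (0 : ℝ)..s, V (extendPath c r)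

lemma IsPicardPath.rescale {V : E → E} {x : E} {t : ℝ} {c : C(UnitTime, E)}
    (hc : IsPicardPath V x t c) (s : UnitTime) : IsPicardPath V x (s * t) (rescalePath s c) := by
  intro r
  have extend_rescale : Set.EqOn (fun q => V (extendPath (rescalePath s c) q))
      (fun q => V (extendPath c (s * q))) (Set.uIcc 0 (r : ℝ)) := by
    intro q hq
    have hq' : q ∈ UnitTime := Set.uIcc_subset_Icc (by norm_num) r.2 hq
    exact congrArg V <| (extendPath_coe (rescalePath s c) ⟨q, hq'⟩).trans
      (extendPath_coe c _).symm
  rw [intervalIntegral.integral_congr extend_rescale, mul_comm, mul_smul,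
    intervalIntegral.smul_integral_comp_mul_left (fun q => V (extendPath c q)), mul_zero]
  exact hc _

lemma IsPicardPath.hasDerivAt [CompleteSpace E] {V : E → E} {x : E} {t : ℝ} {c : C(UnitTime, E)}
    (hc : IsPicardPath V x t c) (hV : ∀ s, ContinuousAt V (c s)) {s : ℝ}
    (hs : s ∈ Set.Ioo (-1) 1) : HasDerivAt (extendPath c) (t • V (extendPath c s)) s := by
  have cont : Continuous fun r => V (extendPath c r) :=
    continuous_iff_continuousAt.2 fun r =>
      ContinuousAt.comp (g := V) (hV _) (extendPath c).continuous.continuousAt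
  refine (((cont.integral_hasStrictDerivAt 0 s).hasDerivAt.const_smul t).const_add x)
    |>.congr_of_eventuallyEq ?_
  filter_upwards [isOpen_Ioo.mem_nhds hs] with r hr
  exact (extendPath_coe c ⟨r, Set.Ioo_subset_Icc_self hr⟩).trans (hc _)

lemma IsPicardPath.initial {V : E → E} {x : E} {c : C(UnitTime, E)}
    (hc : IsPicardPath V x 0 c) (s : UnitTime) : c s = x := by
  simpa using hc s

theorem exists_analyticAt_isPicardPath_iff [CompleteSpace E] {V : E → E} {p : E}
    (hV : AnalyticAt ℝ V p) :
    ∃ ψ : E × ℝ → C(UnitTime, E), AnalyticAt ℝ ψ (p, 0) ∧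
      ψ (p, 0) = ContinuousMap.const UnitTime p ∧
      ∀ᶠ z in 𝓝 (((p, 0) : E × ℝ), ContinuousMap.const UnitTime p),
        IsPicardPath V z.1.1 z.1.2 z.2 ↔ ψ z.1 = z.2 := by
  obtain ⟨N, hN, hN_eq⟩ := exists_analyticAt_superposition (I := UnitTime) hV
  set c₀ := ContinuousMap.const UnitTime p
  let K : E →L[ℝ] C(UnitTime, E) := ContinuousLinearMap.const ℝ UnitTime
  let G : (E × ℝ) × C(UnitTime, E) → C(UnitTime, E) :=
    fun z => z.2 - (K z.1.1 + z.1.2 • pathPrimitive E (N z.2))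
  have hG : AnalyticAt ℝ G ((p, 0), c₀) := by
    have hN' : AnalyticAt ℝ (fun z : (E × ℝ) × C(UnitTime, E) => N z.2) ((p, 0), c₀) :=
      hN.comp_of_eq analyticAt_snd rfl
    have hfst : AnalyticAt ℝ (fun z : (E × ℝ) × C(UnitTime, E) => z.1) ((p, 0), c₀) :=
      analyticAt_fst
    exact analyticAt_snd.sub (((K.analyticAt _).comp (analyticAt_fst.comp hfst)).add
      ((analyticAt_snd.comp hfst).smul (((pathPrimitive E).analyticAt _).comp hN')))
  have G_slice : (fun c => G ((p, 0), c)) = fun c => c - c₀ := by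
    funext c
    simp only [G, zero_smul, add_zero]
    rfl
  have invertible : (fderiv ℝ G ((p, 0), c₀) ∘L .inr ℝ (E × ℝ) C(UnitTime, E)).IsInvertible := by
    rw [fderiv_comp_inr_eq hG.differentiableAt, G_slice, fderiv_sub_const, fderiv_fun_id]
    exact ⟨ContinuousLinearEquiv.refl ℝ _, rfl⟩
  have smooth : ContDiffAt ℝ ω G ((p, 0), c₀) := hG.contDiffAt
  have hω : (ω : WithTop ℕ∞) ≠ 0 := by simp
  refine ⟨smooth.implicitFunction hω invertible,
    (smooth.contDiffAt_implicitFunction hω invertible).analyticAt,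
    smooth.implicitFunction_apply_self hω invertible, ?_⟩
  filter_upwards [smooth.eventually_apply_eq_iff_implicitFunction hω invertible,
    (continuous_snd.tendsto ((p, (0 : ℝ)), c₀)).eventually hN_eq] with z hz hNz
  have primitive_N (s : UnitTime) :
      pathPrimitive E (N z.2) s = ∫ r in (0 : ℝ)..s, V (extendPath z.2 r) :=
    intervalIntegral.integral_congr fun r _ => hNz _
  have G_base : G ((p, 0), c₀) = 0 := (congrFun G_slice c₀).trans (sub_self c₀)
  rw [← hz, G_base, sub_eq_zero, ContinuousMap.ext_iff]
  refine forall_congr' fun s => ?_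
  rw [← primitive_N s]
  rfl

/-- `Φ (x, t)` is, for `x` near `p` and `t` near `0`, the flow of the vector field `V`, and it is
analytic in `x` and `t` jointly. -/
structure IsLocalFlowAt (V : E → E) (Φ : E × ℝ → E) (p : E) : Prop where
  analyticAt : AnalyticAt ℝ Φ (p, 0)
  initial : ∀ᶠ x in 𝓝 p, Φ (x, 0) = x
  hasDerivAt : ∀ᶠ z in 𝓝 (p, 0), HasDerivAt (fun t => Φ (z.1, t)) (V (Φ z)) z.2

theorem eventually_isPicardPath_and_rescale [CompleteSpace E] {V : E → E} {p : E}
    (hV : AnalyticAt ℝ V p)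
    {ψ : E × ℝ → C(UnitTime, E)} (hψ : ContinuousAt ψ (p, 0))
    (hψ₀ : ψ (p, 0) = ContinuousMap.const UnitTime p)
    (hiff : ∀ᶠ z in 𝓝 (((p, 0) : E × ℝ), ContinuousMap.const UnitTime p),
      IsPicardPath V z.1.1 z.1.2 z.2 ↔ ψ z.1 = z.2) :
    ∀ᶠ z in 𝓝 ((p, 0) : E × ℝ), IsPicardPath V z.1 z.2 (ψ z) ∧
      (∀ s, ContinuousAt V (ψ z s)) ∧ ∀ s : UnitTime, ψ (z.1, s * z.2) = rescalePath s (ψ z) := by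
  have hV_cont : ∀ᶠ x in 𝓝 p, ContinuousAt V x :=
    hV.eventually_analyticAt.mono fun _ h => h.continuousAt
  rw [nhds_prod_eq] at hiff
  obtain ⟨P, hP, Q, hQ, hPQ⟩ := eventually_prod_iff.1 hiff
  obtain ⟨δ, hδ, hPδ⟩ := Metric.eventually_nhds_iff_ball.1 hP
  obtain ⟨ε, hε, hQε⟩ := Metric.eventually_nhds_iff_ball.1 hQ
  obtain ⟨η, hη, hVη⟩ := Metric.eventually_nhds_iff_ball.1 hV_cont
  have near := hψ.eventually (Metric.ball_mem_nhds _ (lt_min hε hη))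
  filter_upwards [near, Metric.ball_mem_nhds _ hδ] with z hz hzδ
  rw [hψ₀, ContinuousMap.dist_lt_iff (lt_min hε hη)] at hz
  have hPicard : IsPicardPath V z.1 z.2 (ψ z) :=
    (hPQ (hPδ z hzδ) (hQε _ <| (ContinuousMap.dist_lt_iff hε).2 fun s =>
      (hz s).trans_le (min_le_left _ _))).2 rfl
  refine ⟨hPicard, fun s => hVη _ ((hz s).trans_le (min_le_right _ _)), fun s => ?_⟩
  have hzs : (z.1, (s : ℝ) * z.2) ∈ Metric.ball ((p, 0) : E × ℝ) δ := by
    rw [Metric.mem_ball, Prod.dist_eq, max_lt_iff, dist_zero_right] at hzδ ⊢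
    refine ⟨hzδ.1, lt_of_le_of_lt ?_ hzδ.2⟩
    rw [norm_mul]
    exact mul_le_of_le_one_left (norm_nonneg _) (abs_le.2 s.2)
  have hQs : Q (rescalePath s (ψ z)) := hQε _ <| (ContinuousMap.dist_lt_iff hε).2 fun r =>
    (hz _).trans_le (min_le_left _ _)
  exact (hPQ (hPδ _ hzs) hQs).1 (hPicard.rescale s)

theorem exists_isLocalFlowAt [CompleteSpace E] {V : E → E} {p : E} (hV : AnalyticAt ℝ V p) :
    ∃ Φ, IsLocalFlowAt V Φ p := by
  obtain ⟨ψ, hψ, hψ₀, hiff⟩ := exists_analyticAt_isPicardPath_iff hV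
  have hgood := eventually_isPicardPath_and_rescale hV hψ.continuousAt hψ₀ hiff
  let endTime : UnitTime := ⟨1, by norm_num⟩
  refine ⟨fun z => ψ z endTime, ⟨?_, ?_, ?_⟩⟩
  · exact ((ContinuousMap.evalCLM ℝ endTime).analyticAt _).comp hψ
  · have slice : Tendsto (fun x : E => (x, (0 : ℝ))) (𝓝 p) (𝓝 (p, 0)) :=
      (Continuous.prodMk_left 0).tendsto p
    filter_upwards [slice.eventually hgood] with x hx using hx.1.initial endTime
  rw [nhds_prod_eq] at hgood ⊢
  obtain ⟨P, hP, Q, hQ, hPQ⟩ := eventually_prod_iff.1 hgood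
  obtain ⟨T, hQT, hT : 0 < T⟩ :=
    ((hQ.filter_mono nhdsWithin_le_nhds).and (self_mem_nhdsWithin (s := Set.Ioi 0))).exists
  have hTime : ∀ᶠ t in 𝓝 (0 : ℝ), t ∈ Set.Ioo (-T) T := Ioo_mem_nhds (neg_lt_zero.2 hT) hT
  filter_upwards [hP.prod_mk hTime] with ⟨x, τ⟩ ⟨hx, hτ⟩
  obtain ⟨hPicard, hcont, hrescale⟩ := hPQ hx hQT
  have flow_eq {t : ℝ} (ht : t ∈ Set.Ioo (-T) T) :
      ψ (x, t) endTime = extendPath (ψ (x, T)) (t / T) := by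
    have mem : t / T ∈ Set.Icc (-1) 1 :=
      ⟨by rw [le_div_iff₀ hT]; linarith [ht.1], by rw [div_le_one hT]; exact ht.2.le⟩
    have rescaled := hrescale ⟨t / T, mem⟩
    simp only [div_mul_cancel₀ t hT.ne'] at rescaled
    rw [rescaled, rescalePath_one]
  have scaled_mem : τ / T ∈ Set.Ioo (-1) 1 :=
    ⟨by rw [lt_div_iff₀ hT]; linarith [hτ.1], by rw [div_lt_one hT]; exact hτ.2⟩
  have deriv_scaled :=
    (hPicard.hasDerivAt hcont scaled_mem).scomp τ ((hasDerivAt_id τ).div_const T)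
  rw [smul_smul, one_div, inv_mul_cancel₀ hT.ne', one_smul, ← flow_eq hτ] at deriv_scaled
  refine deriv_scaled.congr_of_eventuallyEq ?_
  filter_upwards [isOpen_Ioo.mem_nhds hτ] with t ht using flow_eq ht

end LocalFlow

section IntegralFamily

variable {Λ E G : Type*} [TopologicalSpace Λ] [NormedAddCommGroup E] [NormedSpace ℝ E]
  [NormedAddCommGroup G] [NormedSpace ℝ G]

/-- For parameters `l` near `l₀`, the curves `t ↦ γ (l, t)` are integral curves of `V` for times
near `0`, and they start near `p = γ (l₀, 0)`. -/
structure IsIntegralFamilyAt (V : E → E) (γ : Λ × ℝ → E) (l₀ : Λ) (p : E) : Prop where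
  continuousAt : ContinuousAt γ (l₀, 0)
  base : γ (l₀, 0) = p
  hasDerivAt : ∀ᶠ z in 𝓝 (l₀, 0), HasDerivAt (fun t => γ (z.1, t)) (V (γ z)) z.2

lemma IsLocalFlowAt.isIntegralFamilyAt {V : E → E} {Φ : E × ℝ → E} {p : E}
    (hΦ : IsLocalFlowAt V Φ p) : IsIntegralFamilyAt V Φ p p :=
  ⟨hΦ.analyticAt.continuousAt, hΦ.initial.self_of_nhds, hΦ.hasDerivAt⟩

lemma IsIntegralFamilyAt.reparam {Λ' : Type*} [TopologicalSpace Λ'] {V : E → E} {γ : Λ × ℝ → E}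
    {l₀ : Λ} {p : E} (hγ : IsIntegralFamilyAt V γ l₀ p) {σ : Λ' → Λ} {τ : Λ' → ℝ} {m₀ : Λ'}
    (hσ : ContinuousAt σ m₀) (hτ : ContinuousAt τ m₀) (hσ₀ : σ m₀ = l₀) (hτ₀ : τ m₀ = 0) :
    IsIntegralFamilyAt V (fun z => γ (σ z.1, τ z.1 + z.2)) m₀ p := by
  have base : (σ m₀, τ m₀ + 0) = (l₀, (0 : ℝ)) := by rw [hσ₀, hτ₀, add_zero]
  have cont : ContinuousAt (fun z : Λ' × ℝ => (σ z.1, τ z.1 + z.2)) (m₀, 0) :=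
    (hσ.comp_of_eq continuousAt_fst rfl).prodMk
      ((hτ.comp_of_eq continuousAt_fst rfl).add continuousAt_snd)
  refine ⟨hγ.continuousAt.comp_of_eq cont base, base ▸ hγ.base, ?_⟩
  have hderiv := hγ.hasDerivAt
  rw [← base] at hderiv
  filter_upwards [cont.eventually hderiv] with z hz using hz.comp_const_add (τ z.1) z.2

lemma IsIntegralFamilyAt.map {V : E → E} {W : G → G} {γ : Λ × ℝ → E} {l₀ : Λ} {p : E}
    (hγ : IsIntegralFamilyAt V γ l₀ p) {v : E → G} (hv : ∀ᶠ x in 𝓝 p, DifferentiableAt ℝ v x)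
    (hvVW : ∀ᶠ x in 𝓝 p, fderiv ℝ v x (V x) = W (v x)) :
    IsIntegralFamilyAt W (fun z => v (γ z)) l₀ (v p) := by
  refine ⟨hv.self_of_nhds.continuousAt.comp_of_eq hγ.continuousAt hγ.base,
    congrArg v hγ.base, ?_⟩
  have tendsto_γ : Tendsto γ (𝓝 (l₀, 0)) (𝓝 p) := hγ.base ▸ hγ.continuousAt
  filter_upwards [hγ.hasDerivAt, tendsto_γ.eventually hv, tendsto_γ.eventually hvVW]
    with z hz hvz hVz
  exact hVz ▸ hvz.hasFDerivAt.comp_hasDerivAt z.2 hz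

lemma IsIntegralFamilyAt.congr {V : E → E} {γ δ : Λ × ℝ → E} {l₀ : Λ} {p : E}
    (hγ : IsIntegralFamilyAt V γ l₀ p) (hδγ : δ =ᶠ[𝓝 (l₀, 0)] γ) : IsIntegralFamilyAt V δ l₀ p := by
  refine ⟨hγ.continuousAt.congr hδγ.symm, hδγ.eq_of_nhds.trans hγ.base, ?_⟩
  filter_upwards [hγ.hasDerivAt, hδγ.eventually_nhds] with z hz hzδγ
  have slice : Tendsto (fun t => (z.1, t)) (𝓝 z.2) (𝓝 z) :=
    (Continuous.prodMk_right z.1).tendsto z.2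
  rw [hzδγ.self_of_nhds]
  exact hz.congr_of_eventuallyEq (slice.eventually hzδγ)

theorem IsIntegralFamilyAt.eventuallyEq {V : E → E} {γ δ : Λ × ℝ → E} {l₀ : Λ} {p : E}
    (hγ : IsIntegralFamilyAt V γ l₀ p) (hδ : IsIntegralFamilyAt V δ l₀ p)
    (hV : ContDiffAt ℝ 1 V p) (hinit : ∀ᶠ l in 𝓝 l₀, γ (l, 0) = δ (l, 0)) :
    γ =ᶠ[𝓝 (l₀, 0)] δ := by
  obtain ⟨K, s, hs, hVs⟩ := hV.exists_lipschitzOnWith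
  have γ_mem : ∀ᶠ z in 𝓝 (l₀, 0), γ z ∈ s := hγ.continuousAt (hγ.base.symm ▸ hs)
  have δ_mem : ∀ᶠ z in 𝓝 (l₀, 0), δ z ∈ s := hδ.continuousAt (hδ.base.symm ▸ hs)
  have regular := (hγ.hasDerivAt.and γ_mem).and (hδ.hasDerivAt.and δ_mem)
  rw [nhds_prod_eq] at regular
  obtain ⟨P, hP, Q, hQ, hPQ⟩ := eventually_prod_iff.1 regular
  obtain ⟨ε, hε, hQε⟩ := Metric.eventually_nhds_iff_ball.1 hQ
  rw [Real.ball_eq_Ioo] at hQε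
  have hzero : (0 : ℝ) ∈ Set.Ioo (0 - ε) (0 + ε) := by simpa using hε
  rw [EventuallyEq, nhds_prod_eq]
  filter_upwards [(hP.and hinit).prod_mk (Ioo_mem_nhds hzero.1 hzero.2)]
    with ⟨l, t⟩ ⟨⟨hl, hl₀⟩, ht⟩
  exact ODE_solution_unique_of_mem_Ioo (v := fun _ => V) (s := fun _ => s) (K := K)
    (f := fun t => γ (l, t)) (g := fun t => δ (l, t))
    (fun _ _ => hVs) hzero (fun r hr => (hPQ hl (hQε r hr)).1)
    (fun r hr => (hPQ hl (hQε r hr)).2) hl₀ ht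

end IntegralFamily

section FlowProjection

variable {E : Type*} [NormedAddCommGroup E] [NormedSpace ℝ E] {V : E → E} {Φ : E × ℝ → E} {p : E}
  {f : E → ℝ}

lemma IsLocalFlowAt.apply_base (hΦ : IsLocalFlowAt V Φ p) : Φ (p, 0) = p :=
  hΦ.initial.self_of_nhds

lemma IsLocalFlowAt.tendsto (hΦ : IsLocalFlowAt V Φ p) : Tendsto Φ (𝓝 (p, 0)) (𝓝 p) := by
  have := hΦ.analyticAt.continuousAt.tendsto
  rwa [hΦ.apply_base] at this

theorem IsLocalFlowAt.eventually_fderiv_apply {G : Type*} [NormedAddCommGroup G] [NormedSpace ℝ G]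
    [CompleteSpace G] {W : G → G} {Z : E → G} {q : G} (hΦ : IsLocalFlowAt V Φ p)
    (hZ : AnalyticAt ℝ Z p) (hZΦ : IsIntegralFamilyAt W (fun z => Z (Φ z)) p q) :
    ∀ᶠ x in 𝓝 p, fderiv ℝ Z x (V x) = W (Z x) := by
  have time_zero : Tendsto (fun x : E => (x, (0 : ℝ))) (𝓝 p) (𝓝 (p, 0)) :=
    (Continuous.prodMk_left 0).tendsto p
  filter_upwards [hΦ.initial, time_zero.eventually hΦ.hasDerivAt,
    time_zero.eventually hZΦ.hasDerivAt, hZ.eventually_analyticAt] with x hx dΦ dZΦ hZx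
  have dZ : HasFDerivAt Z (fderiv ℝ Z x) (Φ (x, 0)) := by
    rw [hx]
    exact hZx.differentiableAt.hasFDerivAt
  have chain := (dZ.comp_hasDerivAt (0 : ℝ) dΦ).unique dZΦ
  rwa [hx] at chain

theorem IsLocalFlowAt.eventually_flow_flow (hΦ : IsLocalFlowAt V Φ p) (hV : ContDiffAt ℝ 1 V p) :
    ∀ᶠ w in 𝓝 (((p, 0) : E × ℝ), (0 : ℝ)), Φ (Φ w.1, w.2) = Φ (w.1.1, w.1.2 + w.2) := by
  have restarted := hΦ.isIntegralFamilyAt.reparam (σ := Φ) (τ := fun _ => 0)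
    hΦ.analyticAt.continuousAt continuousAt_const hΦ.apply_base rfl
  have shifted := hΦ.isIntegralFamilyAt.reparam (σ := Prod.fst) (τ := Prod.snd) (m₀ := (p, 0))
    continuousAt_fst continuousAt_snd rfl rfl
  refine (restarted.eventuallyEq shifted hV ?_).mono fun w hw => by simpa using hw
  filter_upwards [hΦ.tendsto.eventually hΦ.initial] with z hz
  simpa using hz

theorem IsLocalFlowAt.eventually_level_flow (hΦ : IsLocalFlowAt V Φ p) (hf : AnalyticAt ℝ f p)
    (hfV : ∀ᶠ x in 𝓝 p, fderiv ℝ f x (V x) = 1) : ∀ᶠ z in 𝓝 (p, 0), f (Φ z) = f z.1 + z.2 := by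
  have along_flow := hΦ.isIntegralFamilyAt.map (W := fun _ => (1 : ℝ))
    (hf.eventually_analyticAt.mono fun _ h => h.differentiableAt) hfV
  have translated : IsIntegralFamilyAt (fun _ => (1 : ℝ)) (fun z : E × ℝ => f z.1 + z.2) p (f p) :=
    ⟨(hf.continuousAt.comp_of_eq continuousAt_fst rfl).add continuousAt_snd, add_zero _,
      .of_forall fun z => (hasDerivAt_id' z.2).const_add (f z.1)⟩
  refine along_flow.eventuallyEq translated contDiffAt_const ?_
  filter_upwards [hΦ.initial] with x hx
  rw [hx, add_zero]

/-- The projection to the hypersurface `{f = 0}` along the flow lines of `Φ`, if `f` grows at unit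
speed along them. -/
def flowProjection (Φ : E × ℝ → E) (f : E → ℝ) (x : E) : E :=
  Φ (x, -f x)

lemma tendsto_prodMk_neg_level {X : Type*} [TopologicalSpace X] {f : X → ℝ} {p : X}
    (hf : ContinuousAt f p) (hf₀ : f p = 0) :
    Tendsto (fun x => (x, -f x)) (𝓝 p) (𝓝 (p, 0)) := by
  simpa [hf₀] using tendsto_id.prodMk_nhds hf.neg.tendsto

lemma IsLocalFlowAt.analyticAt_flowProjection (hΦ : IsLocalFlowAt V Φ p) (hf : AnalyticAt ℝ f p)
    (hf₀ : f p = 0) : AnalyticAt ℝ (flowProjection Φ f) p :=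
  hΦ.analyticAt.comp_of_eq (analyticAt_id.prod hf.neg) (by simp [hf₀])

lemma IsLocalFlowAt.flowProjection_base (hΦ : IsLocalFlowAt V Φ p) (hf₀ : f p = 0) :
    flowProjection Φ f p = p := by
  rw [flowProjection, hf₀, neg_zero, hΦ.apply_base]

theorem IsLocalFlowAt.eventually_level_flowProjection (hΦ : IsLocalFlowAt V Φ p)
    (hf : AnalyticAt ℝ f p) (hf₀ : f p = 0) (hfV : ∀ᶠ x in 𝓝 p, fderiv ℝ f x (V x) = 1) :
    ∀ᶠ x in 𝓝 p, f (flowProjection Φ f x) = 0 := by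
  filter_upwards [(tendsto_prodMk_neg_level hf.continuousAt hf₀).eventually
    (hΦ.eventually_level_flow hf hfV)] with x hx
  rw [flowProjection, hx, add_neg_cancel]

theorem IsLocalFlowAt.eventually_flow_flowProjection (hΦ : IsLocalFlowAt V Φ p)
    (hV : ContDiffAt ℝ 1 V p) (hf : ContinuousAt f p) (hf₀ : f p = 0) :
    ∀ᶠ x in 𝓝 p, Φ (flowProjection Φ f x, f x) = x := by
  have there_and_back : Tendsto (fun x => ((x, -f x), f x)) (𝓝 p) (𝓝 ((p, 0), 0)) :=
    (tendsto_prodMk_neg_level hf hf₀).prodMk_nhds (hf₀ ▸ hf)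
  filter_upwards [there_and_back.eventually (hΦ.eventually_flow_flow hV), hΦ.initial] with x hx hx₀
  rw [flowProjection, hx, neg_add_cancel, hx₀]

theorem IsLocalFlowAt.eventually_flowProjection_flow (hΦ : IsLocalFlowAt V Φ p)
    (hV : ContDiffAt ℝ 1 V p) (hf : AnalyticAt ℝ f p) (hf₀ : f p = 0)
    (hfV : ∀ᶠ x in 𝓝 p, fderiv ℝ f x (V x) = 1) :
    ∀ᶠ z in 𝓝 (p, 0), flowProjection Φ f (Φ z) = flowProjection Φ f z.1 := by
  have level_tendsto : Tendsto (fun z => -f (Φ z)) (𝓝 (p, 0)) (𝓝 0) := by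
    simpa [hf₀] using (hf.continuousAt.tendsto.comp hΦ.tendsto).neg
  filter_upwards [(tendsto_id.prodMk_nhds level_tendsto).eventually (hΦ.eventually_flow_flow hV),
    hΦ.eventually_level_flow hf hfV] with z hz hlevel
  simp only [id, hlevel] at hz
  rw [flowProjection, hlevel, hz, flowProjection]
  ring_nf

end FlowProjection

section LocalCauchy

variable {E F : Type*} [NormedAddCommGroup E] [NormedSpace ℝ E] [NormedAddCommGroup F]
  [NormedSpace ℝ F] {f : E → ℝ} {V : E → E} {B : E × F → F} {p : E}

/-- Near `p`, the function `u` is an analytic solution of the first order Cauchy problem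
`D_V u = B(x, u)` with `u = 0` on the hypersurface `{f = 0}`. -/
structure IsCauchySolutionAt (f : E → ℝ) (V : E → E) (B : E × F → F) (p : E) (u : E → F) :
    Prop where
  analyticAt : AnalyticAt ℝ u p
  fderiv_apply : ∀ᶠ x in 𝓝 p, fderiv ℝ u x (V x) = B (x, u x)
  eq_zero : ∀ᶠ x in 𝓝 p, f x = 0 → u x = 0

/-- The vector field on `E × F` whose integral curves are the characteristics of `D_V u = B(x, u)`,
that is, the lifts of the integral curves of `V` to the graphs of solutions. -/
def characteristicField (V : E → E) (B : E × F → F) (z : E × F) : E × F :=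
  (V z.1, B z)

lemma analyticAt_characteristicField {w : F} (hV : AnalyticAt ℝ V p) (hB : AnalyticAt ℝ B (p, w)) :
    AnalyticAt ℝ (characteristicField V B) (p, w) :=
  (hV.comp_of_eq analyticAt_fst rfl).prod hB

lemma IsLocalFlowAt.fst_characteristic {Φ : (E × F) × ℝ → E × F}
    (hΦ : IsLocalFlowAt (characteristicField V B) Φ (p, 0)) :
    IsLocalFlowAt V (fun z => (Φ ((z.1, 0), z.2)).1) p := by
  have lift : Tendsto (fun x : E => (x, (0 : F))) (𝓝 p) (𝓝 (p, 0)) :=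
    (Continuous.prodMk_left 0).tendsto p
  have lift_time : Tendsto (fun z : E × ℝ => ((z.1, (0 : F)), z.2)) (𝓝 (p, 0)) (𝓝 ((p, 0), 0)) :=
    Continuous.tendsto (by fun_prop) _
  refine ⟨analyticAt_fst.comp (hΦ.analyticAt.comp_of_eq ?_ rfl), ?_, ?_⟩
  · exact (analyticAt_fst.prod analyticAt_const).prod analyticAt_snd
  · filter_upwards [lift.eventually hΦ.initial] with x hx
    rw [hx]
  · filter_upwards [lift_time.eventually hΦ.hasDerivAt] with z hz
    exact (hasFDerivAt_fst (𝕜 := ℝ) (p := Φ ((z.1, 0), z.2))).comp_hasDerivAt z.2 hz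

theorem exists_isCauchySolutionAt_of_unit_speed [CompleteSpace E] [CompleteSpace F]
    (hf : AnalyticAt ℝ f p) (hV : AnalyticAt ℝ V p) (hB : AnalyticAt ℝ B (p, 0)) (hf₀ : f p = 0)
    (hfV : ∀ᶠ x in 𝓝 p, fderiv ℝ f x (V x) = 1) : ∃ u, IsCauchySolutionAt f V B p u := by
  obtain ⟨Φ, hΦ⟩ := exists_isLocalFlowAt (analyticAt_characteristicField hV hB)
  have hφ := hΦ.fst_characteristic
  set φ : E × ℝ → E := fun z => (Φ ((z.1, 0), z.2)).1
  set S := flowProjection φ f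
  let start : E → (E × F) × ℝ := fun x => ((S x, 0), f x)
  have hS : AnalyticAt ℝ S p := hφ.analyticAt_flowProjection hf hf₀
  have start_base : start p = ((p, 0), 0) := by
    simp only [start, hf₀, hφ.flowProjection_base hf₀, S]
  have hstart : AnalyticAt ℝ start p := (hS.prod analyticAt_const).prod hf
  have start_tendsto : Tendsto start (𝓝 p) (𝓝 ((p, 0), 0)) := start_base ▸ hstart.continuousAt
  set Z : E → E × F := fun x => Φ (start x)
  have hZ : AnalyticAt ℝ Z p := hΦ.analyticAt.comp_of_eq hstart start_base
  have hV₁ : ContDiffAt ℝ 1 V p := hV.contDiffAt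
  have Z_along_flow : IsIntegralFamilyAt (characteristicField V B) (fun z => Z (φ z)) p (p, 0) := by
    refine (hΦ.isIntegralFamilyAt.reparam (σ := fun x => (S x, 0)) (τ := f)
      (hS.continuousAt.prodMk continuousAt_const) hf.continuousAt
      (congrArg Prod.fst start_base) hf₀).congr ?_
    filter_upwards [hφ.eventually_flowProjection_flow hV₁ hf hf₀ hfV,
      hφ.eventually_level_flow hf hfV] with z hSz hfz
    simp only [Z, start, S, hSz, hfz]
  have fst_Z : ∀ᶠ x in 𝓝 p, (Z x).1 = x :=
    hφ.eventually_flow_flowProjection hV₁ hf.continuousAt hf₀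
  refine ⟨fun x => (Z x).2, analyticAt_snd.comp hZ, ?_, ?_⟩
  · filter_upwards [hφ.eventually_fderiv_apply hZ Z_along_flow, fst_Z, hZ.eventually_analyticAt]
      with x hx hfst hZx
    rw [fderiv.snd hZx.differentiableAt, ContinuousLinearMap.comp_apply, hx]
    exact congrArg B (Prod.ext hfst rfl)
  · filter_upwards [(continuous_fst.tendsto ((p, (0 : F)), (0 : ℝ))).comp start_tendsto
      |>.eventually hΦ.initial] with x hx hfx
    simp only [Z, start, hfx, Function.comp_apply] at hx ⊢
    rw [hx]

theorem IsCauchySolutionAt.eventuallyEq_of_unit_speed [CompleteSpace E] [CompleteSpace F]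
    {u v : E → F} (hu : IsCauchySolutionAt f V B p u) (hv : IsCauchySolutionAt f V B p v)
    (hf : AnalyticAt ℝ f p) (hV : AnalyticAt ℝ V p) (hB : AnalyticAt ℝ B (p, 0)) (hf₀ : f p = 0)
    (hfV : ∀ᶠ x in 𝓝 p, fderiv ℝ f x (V x) = 1) : u =ᶠ[𝓝 p] v := by
  obtain ⟨φ, hφ⟩ := exists_isLocalFlowAt hV
  have hW : ContDiffAt ℝ 1 (characteristicField V B) (p, 0) :=
    (analyticAt_characteristicField hV hB).contDiffAt
  have shifted := hφ.isIntegralFamilyAt.reparam (σ := id) (τ := fun x => -f x) continuousAt_id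
    hf.continuousAt.neg rfl (by simp [hf₀])
  have lift {w : E → F} (hw : IsCauchySolutionAt f V B p w) :
      IsIntegralFamilyAt (characteristicField V B)
        (fun z : E × ℝ => (φ (z.1, -f z.1 + z.2), w (φ (z.1, -f z.1 + z.2)))) p (p, 0) := by
    have base : (p, w p) = (p, 0) := by rw [hw.eq_zero.self_of_nhds hf₀]
    have differentiable : ∀ᶠ x in 𝓝 p, DifferentiableAt ℝ w x :=
      hw.analyticAt.eventually_analyticAt.mono fun _ h => h.differentiableAt
    refine base ▸ shifted.map (v := fun x => (x, w x))
      (differentiable.mono fun x hx => differentiableAt_id.prodMk hx) ?_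
    filter_upwards [differentiable, hw.fderiv_apply] with x hx hwx
    rw [DifferentiableAt.fderiv_prodMk differentiableAt_fun_id hx]
    simp [characteristicField, hwx]
  have same_start : ∀ᶠ x in 𝓝 p, f (φ (x, -f x)) = 0 :=
    hφ.eventually_level_flowProjection hf hf₀ hfV
  have S_tendsto : Tendsto (fun x => φ (x, -f x)) (𝓝 p) (𝓝 p) :=
    hφ.tendsto.comp (tendsto_prodMk_neg_level hf.continuousAt hf₀)
  have agree := (lift hu).eventuallyEq (lift hv) hW <| by
    filter_upwards [same_start, S_tendsto.eventually hu.eq_zero, S_tendsto.eventually hv.eq_zero]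
      with x hx hux hvx
    simp only [add_zero, hux hx, hvx hx]
  have graph : Tendsto (fun x => (x, f x)) (𝓝 p) (𝓝 (p, 0)) := by
    simpa [hf₀] using tendsto_id.prodMk_nhds hf.continuousAt.tendsto
  filter_upwards [graph.eventually agree, hφ.initial] with x hx hx₀
  simpa [hx₀] using hx

end LocalCauchy

section Transversality

variable {E F : Type*} [NormedAddCommGroup E] [NormedSpace ℝ E] [NormedAddCommGroup F]
  [NormedSpace ℝ F] {f : E → ℝ} {V : E → E} {B : E × F → F} {p : E} {u v : E → F}

/-- The hypersurface `{f = 0}` passes through `p`, is analytic there, and is noncharacteristic for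
the analytic vector field `V`, that is, transversal to it. -/
structure IsNoncharacteristicAt (f : E → ℝ) (V : E → E) (p : E) : Prop where
  analyticAt_level : AnalyticAt ℝ f p
  analyticAt_field : AnalyticAt ℝ V p
  level_eq_zero : f p = 0
  fderiv_ne_zero : fderiv ℝ f p (V p) ≠ 0

lemma IsCauchySolutionAt.eventually [CompleteSpace F] (hu : IsCauchySolutionAt f V B p u) :
    ∀ᶠ q in 𝓝 p, IsCauchySolutionAt f V B q u := by
  filter_upwards [hu.analyticAt.eventually_analyticAt, hu.fderiv_apply.eventually_nhds,
    hu.eq_zero.eventually_nhds] with q hq₁ hq₂ hq₃ using ⟨hq₁, hq₂, hq₃⟩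

lemma IsCauchySolutionAt.congr (hu : IsCauchySolutionAt f V B p u) (huv : v =ᶠ[𝓝 p] u) :
    IsCauchySolutionAt f V B p v := by
  refine ⟨hu.analyticAt.congr huv.symm, ?_, ?_⟩
  · filter_upwards [hu.fderiv_apply, huv.eventually_nhds] with x hx hxuv
    rw [EventuallyEq.fderiv_eq hxuv, hxuv.self_of_nhds, hx]
  · filter_upwards [hu.eq_zero, huv] with x hx hxuv hfx
    rw [hxuv, hx hfx]

lemma isCauchySolutionAt_smul_iff {c : E → ℝ} (hc : ∀ᶠ x in 𝓝 p, c x ≠ 0) :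
    IsCauchySolutionAt f (fun x => c x • V x) (fun z => c z.1 • B z) p u ↔
      IsCauchySolutionAt f V B p u := by
  have equation : (∀ᶠ x in 𝓝 p, fderiv ℝ u x (c x • V x) = c x • B (x, u x)) ↔
      ∀ᶠ x in 𝓝 p, fderiv ℝ u x (V x) = B (x, u x) := by
    refine eventually_congr (hc.mono fun x hx => ?_)
    rw [map_smul, (smul_right_injective F hx).eq_iff]
  exact ⟨fun h => ⟨h.1, equation.1 h.2, h.3⟩, fun h => ⟨h.1, equation.2 h.2, h.3⟩⟩

theorem IsNoncharacteristicAt.exists_unit_speed [CompleteSpace E]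
    (h : IsNoncharacteristicAt f V p) :
    ∃ c : E → ℝ, AnalyticAt ℝ c p ∧ (∀ᶠ x in 𝓝 p, c x ≠ 0) ∧
      ∀ᶠ x in 𝓝 p, fderiv ℝ f x (c x • V x) = 1 := by
  have speed : AnalyticAt ℝ (fun x => fderiv ℝ f x (V x)) p :=
    (h.analyticAt_level.fderiv.contDiffAt.clm_apply h.analyticAt_field.contDiffAt).analyticAt
  have speed_ne : ∀ᶠ x in 𝓝 p, fderiv ℝ f x (V x) ≠ 0 :=
    speed.continuousAt.eventually_ne h.fderiv_ne_zero
  refine ⟨_, speed.inv h.fderiv_ne_zero, speed_ne.mono fun x hx => inv_ne_zero hx, ?_⟩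
  filter_upwards [speed_ne] with x hx
  rw [map_smul, smul_eq_mul, Pi.inv_apply, inv_mul_cancel₀ hx]

variable [CompleteSpace E] [CompleteSpace F]

theorem IsNoncharacteristicAt.exists_isCauchySolutionAt (h : IsNoncharacteristicAt f V p)
    (hB : AnalyticAt ℝ B (p, 0)) : ∃ u, IsCauchySolutionAt f V B p u := by
  obtain ⟨c, hc, hc₀, hcf⟩ := h.exists_unit_speed
  obtain ⟨u, hu⟩ := exists_isCauchySolutionAt_of_unit_speed h.analyticAt_level
    (hc.smul h.analyticAt_field) ((hc.comp_of_eq analyticAt_fst rfl).smul hB) h.level_eq_zero hcf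
  exact ⟨u, (isCauchySolutionAt_smul_iff hc₀).1 hu⟩

theorem IsNoncharacteristicAt.eventuallyEq (h : IsNoncharacteristicAt f V p)
    (hB : AnalyticAt ℝ B (p, 0)) (hu : IsCauchySolutionAt f V B p u)
    (hv : IsCauchySolutionAt f V B p v) : u =ᶠ[𝓝 p] v := by
  obtain ⟨c, hc, hc₀, hcf⟩ := h.exists_unit_speed
  exact ((isCauchySolutionAt_smul_iff hc₀).2 hu).eventuallyEq_of_unit_speed
    ((isCauchySolutionAt_smul_iff hc₀).2 hv) h.analyticAt_level (hc.smul h.analyticAt_field)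
    ((hc.comp_of_eq analyticAt_fst rfl).smul hB) h.level_eq_zero hcf

end Transversality

section Gluing

variable {E F : Type*} [NormedAddCommGroup E] [NormedSpace ℝ E] [NormedAddCommGroup F]
  [NormedSpace ℝ F]

lemma eqOn_ball_of_compatible_germs {S : Set E} {U : E → E → F} {r : E → ℝ}
    (hU : ∀ p ∈ S, AnalyticOnNhd ℝ (U p) (Metric.ball p (3 * r p)))
    (hcompat : ∀ p ∈ S, ∀ q ∈ Metric.ball p (3 * r p), q ∈ S → U p =ᶠ[𝓝 q] U q)
    {p q x : E} (hp : p ∈ S) (hq : q ∈ S) (hqp : r q ≤ r p) (hxp : x ∈ Metric.ball p (r p))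
    (hxq : x ∈ Metric.ball q (r q)) : U p x = U q x := by
  have r_pos : 0 < r q := dist_nonneg.trans_lt (Metric.mem_ball.1 hxq)
  have large_ball : Metric.ball q (r q) ⊆ Metric.ball p (3 * r p) := fun z hz => by
    rw [Metric.mem_ball] at *
    linarith [dist_triangle4_right z p x q, dist_triangle z q p, dist_triangle q x p,
      dist_comm q x]
  have center : q ∈ Metric.ball q (r q) := Metric.mem_ball_self r_pos
  exact ((hU p hp).mono large_ball).eqOn_of_preconnected_of_eventuallyEq
    ((hU q hq).mono (Metric.ball_subset_ball (by linarith)))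
    (convex_ball q (r q)).isPreconnected center (hcompat p hp q (large_ball center) hq) hxq

theorem exists_eventuallyEq_of_compatible_germs [CompleteSpace F] {S : Set E} {U : E → E → F}
    (hU : ∀ p ∈ S, AnalyticAt ℝ (U p) p)
    (hcompat : ∀ p ∈ S, ∀ᶠ q in 𝓝 p, q ∈ S → U p =ᶠ[𝓝 q] U q) :
    ∃ u : E → F, ∀ p ∈ S, u =ᶠ[𝓝 p] U p := by
  have radius : ∀ p ∈ S, ∃ r > 0, ∀ q ∈ Metric.ball p (3 * r),
      AnalyticAt ℝ (U p) q ∧ (q ∈ S → U p =ᶠ[𝓝 q] U q) := fun p hp => by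
    obtain ⟨ε, hε, hball⟩ := Metric.eventually_nhds_iff_ball.1
      ((hU p hp).eventually_analyticAt.and (hcompat p hp))
    exact ⟨ε / 3, by positivity, by rwa [mul_div_cancel₀ ε three_ne_zero]⟩
  choose! r r_pos hr using radius
  have eq_on_overlap {p q x : E} (hp : p ∈ S) (hq : q ∈ S) (hxp : x ∈ Metric.ball p (r p))
      (hxq : x ∈ Metric.ball q (r q)) : U p x = U q x := by
    have analytic := fun p hp q hq => (hr p hp q hq).1
    have compatible := fun p hp q hq => (hr p hp q hq).2
    rcases le_total (r q) (r p) with h | h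
    · exact eqOn_ball_of_compatible_germs analytic compatible hp hq h hxp hxq
    · exact (eqOn_ball_of_compatible_germs analytic compatible hq hp h hxq hxp).symm
  have center : ∀ x, ∃ p, (∃ q ∈ S, x ∈ Metric.ball q (r q)) → p ∈ S ∧ x ∈ Metric.ball p (r p) :=
    fun x => by
      by_cases h : ∃ q ∈ S, x ∈ Metric.ball q (r q)
      · exact h.imp fun _ hq _ => hq
      · exact ⟨x, fun h' => absurd h' h⟩
  choose c hc using center
  refine ⟨fun x => U (c x) x, fun p hp => ?_⟩
  filter_upwards [Metric.ball_mem_nhds p (r_pos p hp)] with x hx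
  obtain ⟨hcS, hxc⟩ := hc x ⟨p, hp, hx⟩
  exact eq_on_overlap hcS hp hxc hx

theorem exists_isCauchySolutionAt_forall_mem [CompleteSpace E] [CompleteSpace F] {f : E → ℝ}
    {V : E → E} {B : E × F → F} {S : Set E} (hfV : ∀ p ∈ S, IsNoncharacteristicAt f V p)
    (hB : ∀ p ∈ S, AnalyticAt ℝ B (p, 0)) : ∃ u, ∀ p ∈ S, IsCauchySolutionAt f V B p u := by
  choose! U hU using fun p hp => (hfV p hp).exists_isCauchySolutionAt (hB p hp)
  obtain ⟨u, hu⟩ := exists_eventuallyEq_of_compatible_germs (fun p hp => (hU p hp).analyticAt)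
    fun p hp => (hU p hp).eventually.mono fun q hq hqS =>
      (hfV q hqS).eventuallyEq (hB q hqS) hq (hU q hqS)
  exact ⟨u, fun p hp => (hU p hp).congr (hu p hp)⟩

end Gluing

lemma fderiv_eval_apply {𝕜 E F G : Type*} [NontriviallyNormedField 𝕜] [NormedAddCommGroup E]
    [NormedSpace 𝕜 E] [NormedAddCommGroup F] [NormedSpace 𝕜 F] [NormedAddCommGroup G]
    [NormedSpace 𝕜 G] {L : E → F →L[𝕜] G} {v : E → F} {x : E} (hL : DifferentiableAt 𝕜 L x)
    (hv : DifferentiableAt 𝕜 v x) (w : E) :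
    fderiv 𝕜 (fun y => L y (v y)) x w = fderiv 𝕜 L x w (v x) + L x (fderiv 𝕜 v x w) := by
  rw [fderiv_clm_apply hL hv]
  simp [add_comm]

section GeodesicGauge

variable {E : Type*} [NormedAddCommGroup E] [NormedSpace ℝ E] {f : E → ℝ}
  {Γ : E → E →L[ℝ] E →L[ℝ] E} {ν : E → E} {θ ξ : E → E →L[ℝ] ℝ} {u : E → ℝ} {p : E}

/-- The covariant derivative `(w, v) ↦ (∇_w ξ)(v)` of a covector field at `x`, for the connection
`∇_w v = D_w v + Γ x w v`. -/
def covDeriv (Γ : E → E →L[ℝ] E →L[ℝ] E) (ξ : E → E →L[ℝ] ℝ) (x : E) : E →L[ℝ] E →L[ℝ] ℝ :=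
  fderiv ℝ ξ x - ContinuousLinearMap.compL ℝ E E ℝ (ξ x) ∘L Γ x

lemma covDeriv_apply (Γ : E → E →L[ℝ] E →L[ℝ] E) (ξ : E → E →L[ℝ] ℝ) (x w v : E) :
    covDeriv Γ ξ x w v = fderiv ℝ ξ x w v - ξ x (Γ x w v) :=
  rfl

/-- The field `ν` is its own parallel transport near `p`: `∇_ν ν = 0`. -/
def IsGeodesicAt (Γ : E → E →L[ℝ] E →L[ℝ] E) (ν : E → E) (p : E) : Prop :=
  ∀ᶠ x in 𝓝 p, fderiv ℝ ν x (ν x) + Γ x (ν x) (ν x) = 0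

/-- The right-hand side of the transport equation `D_ν ξ = B(x, ξ)` to which
`(∇_ν ξ)(w) + (∇_w ξ)(ν) = θ(w)` reduces once the function `u = ξ(ν)` is known. -/
def gaugeTransport (Γ : E → E →L[ℝ] E →L[ℝ] E) (ν : E → E) (θ : E → E →L[ℝ] ℝ) (u : E → ℝ)
    (z : E × (E →L[ℝ] ℝ)) : E →L[ℝ] ℝ :=
  θ z.1 - fderiv ℝ u z.1 +
    z.2 ∘L (fderiv ℝ ν z.1 + Γ z.1 (ν z.1) + (Γ z.1).flip (ν z.1))

lemma analyticAt_gaugeTransport [CompleteSpace E] (hΓ : AnalyticAt ℝ Γ p) (hν : AnalyticAt ℝ ν p)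
    (hθ : AnalyticAt ℝ θ p) (hu : AnalyticAt ℝ u p) (ζ : E →L[ℝ] ℝ) :
    AnalyticAt ℝ (gaugeTransport Γ ν θ u) (p, ζ) := by
  have flip_analytic : AnalyticAt ℝ (fun x => (Γ x).flip) p :=
    ((ContinuousLinearMap.flipₗᵢ ℝ E E E).toContinuousLinearEquiv.analyticAt _).comp hΓ
  have coefficient : AnalyticAt ℝ (fun x => fderiv ℝ ν x + Γ x (ν x) + (Γ x).flip (ν x)) p :=
    (hν.fderiv.add (hΓ.contDiffAt.clm_apply hν.contDiffAt).analyticAt).add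
      (flip_analytic.contDiffAt.clm_apply hν.contDiffAt).analyticAt
  refine ((hθ.sub hu.fderiv).comp_of_eq analyticAt_fst rfl).add ?_
  exact (analyticAt_snd.contDiffAt.clm_comp
    (coefficient.comp_of_eq analyticAt_fst rfl).contDiffAt).analyticAt

theorem IsCauchySolutionAt.eval_of_isGeodesicAt [CompleteSpace E] (hν : AnalyticAt ℝ ν p)
    (hgeo : IsGeodesicAt Γ ν p)
    (hu : IsCauchySolutionAt f ν (fun z => θ z.1 (ν z.1) / 2) p u)
    (hξ : IsCauchySolutionAt f ν (gaugeTransport Γ ν θ u) p ξ) :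
    IsCauchySolutionAt f ν (fun z => θ z.1 (ν z.1) / 2) p (fun x => ξ x (ν x)) := by
  refine ⟨(hξ.analyticAt.contDiffAt.clm_apply hν.contDiffAt).analyticAt, ?_, ?_⟩
  · filter_upwards [hξ.analyticAt.eventually_analyticAt, hν.eventually_analyticAt, hgeo,
      hu.fderiv_apply, hξ.fderiv_apply] with x hξx hνx geodesic hux transport
    have connection : ξ x (fderiv ℝ ν x (ν x)) + ξ x (Γ x (ν x) (ν x)) = 0 := by
      rw [← map_add, geodesic, map_zero]
    rw [fderiv_eval_apply hξx.differentiableAt hνx.differentiableAt, transport]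
    simp only [gaugeTransport, add_apply, sub_apply,
      ContinuousLinearMap.comp_apply, ContinuousLinearMap.flip_apply, map_add, hux]
    linarith
  · filter_upwards [hξ.eq_zero] with x hx hfx
    rw [hx hfx, zero_apply]

lemma covDeriv_add_covDeriv_eq {x : E} (hξ : DifferentiableAt ℝ ξ x)
    (hν : DifferentiableAt ℝ ν x) (hu : (fun y => ξ y (ν y)) =ᶠ[𝓝 x] u)
    (htransport : fderiv ℝ ξ x (ν x) = gaugeTransport Γ ν θ u (x, ξ x)) (w : E) :
    covDeriv Γ ξ x (ν x) w + covDeriv Γ ξ x w (ν x) = θ x w := by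
  have product_rule := fderiv_eval_apply hξ hν w
  rw [hu.fderiv_eq] at product_rule
  simp only [covDeriv_apply, htransport, gaugeTransport, add_apply,
    sub_apply, ContinuousLinearMap.comp_apply, ContinuousLinearMap.flip_apply,
    map_add, product_rule]
  ring

theorem exists_covDeriv_add_covDeriv_eq [CompleteSpace E] {S : Set E}
    (hfν : ∀ p ∈ S, IsNoncharacteristicAt f ν p) (hΓ : ∀ p ∈ S, AnalyticAt ℝ Γ p)
    (hθ : ∀ p ∈ S, AnalyticAt ℝ θ p) (hgeo : ∀ p ∈ S, IsGeodesicAt Γ ν p) :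
    ∃ ξ : E → E →L[ℝ] ℝ, ∀ p ∈ S, AnalyticAt ℝ ξ p ∧ (∀ᶠ x in 𝓝 p, f x = 0 → ξ x = 0) ∧
      ∀ᶠ x in 𝓝 p, ∀ w, covDeriv Γ ξ x (ν x) w + covDeriv Γ ξ x w (ν x) = θ x w := by
  have hν := fun p hp => (hfν p hp).analyticAt_field
  have analytic_source : ∀ p ∈ S, AnalyticAt ℝ (fun z : E × ℝ => θ z.1 (ν z.1) / 2) (p, 0) :=
    fun p hp => ((((hθ p hp).contDiffAt.clm_apply (hν p hp).contDiffAt).analyticAt).comp_of_eq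
      analyticAt_fst rfl).div_const
  obtain ⟨u, hu⟩ := exists_isCauchySolutionAt_forall_mem hfν analytic_source
  obtain ⟨ξ, hξ⟩ := exists_isCauchySolutionAt_forall_mem hfν fun p hp =>
    analyticAt_gaugeTransport (hΓ p hp) (hν p hp) (hθ p hp) (hu p hp).analyticAt 0
  refine ⟨ξ, fun p hp => ⟨(hξ p hp).analyticAt, (hξ p hp).eq_zero, ?_⟩⟩
  have eval_eq : (fun x => ξ x (ν x)) =ᶠ[𝓝 p] u :=
    (hfν p hp).eventuallyEq (analytic_source p hp)
      ((hu p hp).eval_of_isGeodesicAt (hν p hp) (hgeo p hp) (hξ p hp)) (hu p hp)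
  filter_upwards [(hξ p hp).analyticAt.eventually_analyticAt, (hν p hp).eventually_analyticAt,
    eval_eq.eventually_nhds, (hξ p hp).fderiv_apply] with x hξx hνx hux transport
  exact covDeriv_add_covDeriv_eq hξx.differentiableAt hνx.differentiableAt hux transport

end GeodesicGauge

section FiniteDimensional

variable {𝕜 ι E G : Type*} [NontriviallyNormedField 𝕜] [Fintype ι] [NormedAddCommGroup E]
  [NormedSpace 𝕜 E] [NormedAddCommGroup G] [NormedSpace 𝕜 G]

lemma piRing_symm_apply [CompleteSpace 𝕜] [DecidableEq ι] (a : ι → G) (v : ι → 𝕜) :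
    (ContinuousLinearEquiv.piRing (𝕜 := 𝕜) ι).symm a v = ∑ i, v i • a i :=
  LinearEquiv.piRing_symm_apply 𝕜 a v

lemma apply_eq_sum_single_mul [DecidableEq ι] (L : (ι → 𝕜) →L[𝕜] 𝕜) (v : ι → 𝕜) :
    L v = ∑ j, L (Pi.single j 1) * v j := by
  conv_lhs => rw [← Finset.univ_sum_single v, map_sum]
  refine Finset.sum_congr rfl fun j _ => ?_
  rw [← mul_one (v j), ← smul_eq_mul, Pi.single_smul, map_smul, smul_eq_mul, smul_eq_mul, mul_one,
    mul_comm]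

lemma analyticAt_det [DecidableEq ι] {A : E → Matrix ι ι 𝕜} {x : E}
    (hA : ∀ i j, AnalyticAt 𝕜 (fun y => A y i j) x) : AnalyticAt 𝕜 (fun y => (A y).det) x := by
  simp only [Matrix.det_apply']
  exact Finset.analyticAt_fun_sum _ fun σ _ => analyticAt_const.mul
    (Finset.analyticAt_fun_prod _ fun i _ => hA _ _)

lemma star_dotProduct_mulVec_self (A : Matrix ι ι ℝ) (v : ι → ℝ) :
    star v ⬝ᵥ A.mulVec v = ∑ i, ∑ j, A i j * v i * v j := by
  simp only [dotProduct, Matrix.mulVec, Pi.star_apply, star_trivial, Finset.mul_sum]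
  exact Finset.sum_congr rfl fun i _ => Finset.sum_congr rfl fun j _ => by ring

end FiniteDimensional

section Coordinates

variable {n : ℕ} {g : Pt n → Fin n → Fin n → ℝ} {f : Pt n → ℝ} {x : Pt n}

section Analyticity

lemma analyticAt_ginv (hg : ∀ i j, AnalyticAt ℝ (fun y => g y i j) x)
    (hdet : (Matrix.of (g x)).det ≠ 0) (i j : Fin n) : AnalyticAt ℝ (fun y => ginv g y i j) x := by
  simp only [ginv, Matrix.inv_def, Ring.inverse_eq_inv', Matrix.smul_apply, smul_eq_mul,
    Matrix.adjugate_apply]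
  refine ((analyticAt_det (A := fun y => Matrix.of (g y)) hg).inv hdet).mul
    (analyticAt_det fun a b => ?_)
  by_cases hab : a = j
  · subst hab
    simp only [Matrix.updateRow_self]
    exact analyticAt_const
  · simp only [Matrix.updateRow_ne hab]
    exact hg a b

lemma analyticAt_pd {φ : Pt n → ℝ} (hφ : AnalyticAt ℝ φ x) (i : Fin n) :
    AnalyticAt ℝ (fun y => pd i φ y) x :=
  (hφ.fderiv.contDiffAt.clm_apply contDiffAt_const).analyticAt

lemma analyticAt_chr (hg : ∀ i j, AnalyticAt ℝ (fun y => g y i j) x)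
    (hdet : (Matrix.of (g x)).det ≠ 0) (k i j : Fin n) :
    AnalyticAt ℝ (fun y => chr g y k i j) x :=
  analyticAt_const.mul <| Finset.analyticAt_fun_sum _ fun l _ => (analyticAt_ginv hg hdet k l).mul
    (((analyticAt_pd (hg _ _) _).add (analyticAt_pd (hg _ _) _)).sub (analyticAt_pd (hg _ _) _))

end Analyticity

section Connection

variable {ν : Pt n → Fin n → ℝ} {ξ : Pt n → Pt n →L[ℝ] ℝ}

/-- The Christoffel symbols as a bilinear form, the first argument of which is the direction of
differentiation: `(Γ x w v)^k = Γ^k_{ij} v^i w^j`. -/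
def christoffelForm (g : Pt n → Fin n → Fin n → ℝ) (x : Pt n) : Pt n →L[ℝ] Pt n →L[ℝ] Pt n :=
  (ContinuousLinearEquiv.piRing (𝕜 := ℝ) (E := Pt n →L[ℝ] Pt n) (Fin n)).symm fun j =>
    (ContinuousLinearEquiv.piRing (𝕜 := ℝ) (E := Pt n) (Fin n)).symm fun i k => chr g x k i j

lemma christoffelForm_apply (g : Pt n → Fin n → Fin n → ℝ) (x w v : Pt n) (k : Fin n) :
    christoffelForm g x w v k = ∑ j, w j * ∑ i, v i * chr g x k i j := by
  simp only [christoffelForm, piRing_symm_apply, sum_apply, smul_apply, Finset.sum_apply,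
    Pi.smul_apply, smul_eq_mul]

lemma analyticAt_christoffelForm (hg : ∀ i j, AnalyticAt ℝ (fun y => g y i j) x)
    (hdet : (Matrix.of (g x)).det ≠ 0) : AnalyticAt ℝ (christoffelForm g) x := by
  have components (j : Fin n) : AnalyticAt ℝ (fun y => fun i k => chr g y k i j) x :=
    .pi fun i => .pi fun k => analyticAt_chr hg hdet k i j
  exact (ContinuousLinearEquiv.analyticAt _ _).comp <| AnalyticAt.pi fun j =>
    (ContinuousLinearEquiv.analyticAt _ _).comp (components j)

lemma sum_mul_cdVec (g : Pt n → Fin n → Fin n → ℝ) (hν : DifferentiableAt ℝ ν x) (w : Pt n)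
    (i : Fin n) : ∑ j, w j * cdVec g ν x i j =
      (fderiv ℝ ν x w + christoffelForm g x w (ν x)) i := by
  have derivative : fderiv ℝ ν x w i = ∑ j, pd j (fun y => ν y i) x * w j := by
    simp only [pd, fderiv_apply hν]
    exact apply_eq_sum_single_mul (ContinuousLinearMap.proj i ∘L fderiv ℝ ν x) w
  rw [Pi.add_apply, derivative, christoffelForm_apply, ← Finset.sum_add_distrib]
  refine Finset.sum_congr rfl fun j _ => ?_
  simp only [cdVec, mul_add, mul_comm]

lemma isGeodesicAt_christoffelForm (hν : AnalyticAt ℝ ν x)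
    (hgeo : ∀ᶠ y in 𝓝 x, ∀ i, ∑ j, ν y j * cdVec g ν y i j = 0) :
    IsGeodesicAt (christoffelForm g) ν x := by
  filter_upwards [hν.eventually_analyticAt, hgeo] with y hνy hgeoy
  ext i
  rw [← sum_mul_cdVec g hνy.differentiableAt, hgeoy i, Pi.zero_apply]

lemma cdCov_eq_covDeriv {α : Pt n → Fin n → ℝ} (g : Pt n → Fin n → Fin n → ℝ)
    (hξ : DifferentiableAt ℝ ξ x) (hα : α =ᶠ[𝓝 x] fun y i => ξ y (Pi.single i 1)) (i j : Fin n) :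
    cdCov g α x i j = covDeriv (christoffelForm g) ξ x (Pi.single j 1) (Pi.single i 1) := by
  have component : (fun y => α y i) =ᶠ[𝓝 x] fun y => ξ y (Pi.single i 1) :=
    hα.mono fun y hy => congrFun hy i
  have derivative : pd j (fun y => α y i) x = fderiv ℝ ξ x (Pi.single j 1) (Pi.single i 1) := by
    rw [pd, component.fderiv_eq, fderiv_eval_apply hξ (differentiableAt_const _)]
    simp
  rw [cdCov, covDeriv_apply, derivative, apply_eq_sum_single_mul (ξ x) (christoffelForm g x _ _),
    hα.eq_of_nhds]
  simp [christoffelForm_apply, Pi.single_apply, mul_comm]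

lemma sum_lieg_mul {X : Pt n → Fin n → ℝ} (hξ : DifferentiableAt ℝ ξ x)
    (hX : lowerV g X =ᶠ[𝓝 x] fun y i => ξ y (Pi.single i 1)) (w : Pt n) (i : Fin n) :
    ∑ j, lieg g X x i j * w j = covDeriv (christoffelForm g) ξ x w (Pi.single i 1) +
      covDeriv (christoffelForm g) ξ x (Pi.single i 1) w := by
  simp only [lieg, cdCov_eq_covDeriv g hξ hX, add_mul, Finset.sum_add_distrib]
  congr 1
  · exact (apply_eq_sum_single_mul ((covDeriv (christoffelForm g) ξ x).flip (Pi.single i 1)) w).symm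
  · exact (apply_eq_sum_single_mul _ w).symm

/-- The vector field metrically dual to the covector field `ξ`, inverse to `lowerV`. -/
def raiseV (g : Pt n → Fin n → Fin n → ℝ) (ξ : Pt n → Pt n →L[ℝ] ℝ) (x : Pt n) (i : Fin n) : ℝ :=
  ∑ j, ginv g x i j * ξ x (Pi.single j 1)

lemma lowerV_raiseV (ξ : Pt n → Pt n →L[ℝ] ℝ) (hdet : (Matrix.of (g x)).det ≠ 0) :
    lowerV g (raiseV g ξ) x = fun i => ξ x (Pi.single i 1) := by
  change (Matrix.of (g x)).mulVec ((Matrix.of (g x))⁻¹.mulVec fun j => ξ x (Pi.single j 1)) = _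
  rw [Matrix.mulVec_mulVec, Matrix.mul_nonsing_inv _ (isUnit_iff_ne_zero.2 hdet),
    Matrix.one_mulVec]

lemma analyticAt_raiseV (hg : ∀ i j, AnalyticAt ℝ (fun y => g y i j) x)
    (hdet : (Matrix.of (g x)).det ≠ 0) (hξ : AnalyticAt ℝ ξ x) (i : Fin n) :
    AnalyticAt ℝ (fun y => raiseV g ξ y i) x :=
  Finset.analyticAt_fun_sum _ fun j _ => (analyticAt_ginv hg hdet i j).mul
    (hξ.contDiffAt.clm_apply contDiffAt_const).analyticAt

lemma eventually_det_ne_zero (hg : ∀ i j, AnalyticAt ℝ (fun y => g y i j) x)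
    (hdet : (Matrix.of (g x)).det ≠ 0) : ∀ᶠ y in 𝓝 x, (Matrix.of (g y)).det ≠ 0 :=
  (analyticAt_det (A := fun y => Matrix.of (g y)) hg).continuousAt.eventually_ne hdet

lemma eventually_sum_lieg_raiseV_mul (hg : ∀ i j, AnalyticAt ℝ (fun y => g y i j) x)
    (hdet : (Matrix.of (g x)).det ≠ 0) (hξ : AnalyticAt ℝ ξ x) :
    ∀ᶠ y in 𝓝 x, ∀ w i, ∑ j, lieg g (raiseV g ξ) y i j * w j =
      covDeriv (christoffelForm g) ξ y w (Pi.single i 1) +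
        covDeriv (christoffelForm g) ξ y (Pi.single i 1) w := by
  filter_upwards [hξ.eventually_analyticAt, (eventually_det_ne_zero hg hdet).eventually_nhds]
    with y hξy hdety w i
  exact sum_lieg_mul hξy.differentiableAt (hdety.mono fun z hz => lowerV_raiseV ξ hz) w i

theorem exists_sum_lieg_mul_eq {θ : Pt n → Fin n → ℝ} {S : Set (Pt n)}
    (hg : ∀ p ∈ S, ∀ i j, AnalyticAt ℝ (fun x => g x i j) p)
    (hdet : ∀ p ∈ S, (Matrix.of (g p)).det ≠ 0) (hfν : ∀ p ∈ S, IsNoncharacteristicAt f ν p)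
    (hθ : ∀ p ∈ S, ∀ i, AnalyticAt ℝ (fun x => θ x i) p)
    (hgeo : ∀ p ∈ S, ∀ᶠ x in 𝓝 p, ∀ i, ∑ j, ν x j * cdVec g ν x i j = 0) :
    ∃ X : Pt n → Fin n → ℝ, (∀ᶠ x in 𝓝ˢ S, (∀ i, AnalyticAt ℝ (fun y => X y i) x) ∧
      ∀ i, ∑ j, lieg g X x i j * ν x j = θ x i) ∧ ∀ x ∈ S, ∀ i, X x i = 0 := by
  let covector : (Fin n → ℝ) ≃L[ℝ] Pt n →L[ℝ] ℝ := (ContinuousLinearEquiv.piRing (Fin n)).symm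
  obtain ⟨ξ, hξ⟩ := exists_covDeriv_add_covDeriv_eq (θ := fun x => covector (θ x)) hfν
    (fun p hp => analyticAt_christoffelForm (hg p hp) (hdet p hp))
    (fun p hp => (covector.analyticAt _).comp (AnalyticAt.pi (hθ p hp)))
    (fun p hp => isGeodesicAt_christoffelForm (hfν p hp).analyticAt_field (hgeo p hp))
  refine ⟨raiseV g ξ, eventually_nhdsSet_iff_forall.2 fun p hp => .and ?_ ?_, fun p hp i => ?_⟩
  · exact eventually_all.2 fun i =>
      (analyticAt_raiseV (hg p hp) (hdet p hp) (hξ p hp).1 i).eventually_analyticAt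
  · filter_upwards [eventually_sum_lieg_raiseV_mul (hg p hp) (hdet p hp) (hξ p hp).1,
      (hξ p hp).2.2] with x lie_eq gauge_eq i
    rw [lie_eq, gauge_eq, piRing_symm_apply]
    simp [Pi.single_apply]
  · simp [raiseV, (hξ p hp).2.1.self_of_nhds (hfν p hp).level_eq_zero]

end Connection

section UnitNormal

/-- The squared length `|df|²` of the differential, the square of the denominator in `nuV`. -/
def diffNormSq (g : Pt n → Fin n → Fin n → ℝ) (f : Pt n → ℝ) (x : Pt n) : ℝ :=
  ∑ j, ∑ k, ginv g x j k * pd j f x * pd k f x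

lemma posDef_of_posdef (hsym : symT g) (hpos : posdef g) (x : Pt n) :
    (Matrix.of (g x)).PosDef := by
  refine .of_dotProduct_mulVec_pos (Matrix.IsHermitian.ext fun i j => hsym x j i) fun v hv => ?_
  rw [star_dotProduct_mulVec_self]
  exact hpos x v hv

lemma diffNormSq_pos (hg : (Matrix.of (g x)).PosDef) (hf : fderiv ℝ f x ≠ 0) :
    0 < diffNormSq g f x := by
  have differential_ne : (fun j => pd j f x) ≠ 0 := fun h => hf <| by
    ext v
    rw [apply_eq_sum_single_mul]
    exact Finset.sum_eq_zero fun j _ => mul_eq_zero_of_left (congrFun h j) _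
  have norm_pos := hg.inv.dotProduct_mulVec_pos differential_ne
  rwa [star_dotProduct_mulVec_self] at norm_pos

lemma fderiv_nuV (g : Pt n → Fin n → Fin n → ℝ) (f : Pt n → ℝ) (x : Pt n) :
    fderiv ℝ f x (nuV g f x) = √(diffNormSq g f x) := by
  rw [apply_eq_sum_single_mul, ← Real.div_sqrt, diffNormSq, Finset.sum_div]
  refine Finset.sum_congr rfl fun i _ => ?_
  rw [nuV, gradV, mul_div_assoc', Finset.mul_sum]
  congr 1
  exact Finset.sum_congr rfl fun j _ => by rw [← pd]; ring

lemma fderiv_nuV_ne_zero (hg : (Matrix.of (g x)).PosDef) (hf : fderiv ℝ f x ≠ 0) :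
    fderiv ℝ f x (nuV g f x) ≠ 0 := by
  rw [fderiv_nuV]
  exact (Real.sqrt_pos.2 (diffNormSq_pos hg hf)).ne'

lemma analyticOnNhd_nuV {S : Set (Pt n)} (hg : ∀ i j, AnalyticOnNhd ℝ (fun y => g y i j) S)
    (hgpos : ∀ x ∈ S, (Matrix.of (g x)).PosDef) (hf : AnalyticOnNhd ℝ f S)
    (hf' : ∀ x ∈ S, fderiv ℝ f x ≠ 0) (i : Fin n) :
    AnalyticOnNhd ℝ (fun y => nuV g f y i) S := fun x hx => by
  have inverse := analyticAt_ginv (fun i j => hg i j x hx) (hgpos x hx).det_pos.ne'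
  have norm_pos := diffNormSq_pos (hgpos x hx) (hf' x hx)
  have norm_analytic : AnalyticAt ℝ (diffNormSq g f) x :=
    Finset.analyticAt_fun_sum _ fun j _ => Finset.analyticAt_fun_sum _ fun k _ =>
      ((inverse j k).mul (analyticAt_pd (hf x hx) j)).mul (analyticAt_pd (hf x hx) k)
  refine AnalyticAt.div (Finset.analyticAt_fun_sum _ fun j _ =>
    (inverse i j).mul (analyticAt_pd (hf x hx) j)) ?_ (Real.sqrt_pos.2 norm_pos).ne'
  exact (Real.contDiffAt_sqrt norm_pos.ne').analyticAt.comp norm_analytic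

end UnitNormal

end Coordinates

theorem statement5_general {n : ℕ} {g : Pt n → Fin n → Fin n → ℝ} {f : Pt n → ℝ}
    {ν θ : Pt n → Fin n → ℝ} {S W₀ : Set (Pt n)} (hSf : S ⊆ f ⁻¹' {0}) (hW₀ : IsOpen W₀)
    (hSW₀ : S ⊆ W₀) (hg : ∀ i j, AnalyticOnNhd ℝ (fun x => g x i j) S)
    (hdet : ∀ x ∈ S, (Matrix.of (g x)).det ≠ 0) (hf : AnalyticOnNhd ℝ f S)
    (hν : ∀ i, AnalyticOnNhd ℝ (fun x => ν x i) S) (hθ : ∀ i, AnalyticOnNhd ℝ (fun x => θ x i) S)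
    (htrans : ∀ x ∈ S, fderiv ℝ f x (ν x) ≠ 0)
    (hgeo : ∀ x ∈ W₀, ∀ i, ∑ j, ν x j * cdVec g ν x i j = 0) :
    ∃ W : Set (Pt n), IsOpen W ∧ S ⊆ W ∧ W ⊆ W₀ ∧
      ∃ X : Pt n → Fin n → ℝ,
        (∀ i, AnalyticOnNhd ℝ (fun x => X x i) W) ∧
        (∀ x ∈ S, ∀ i, X x i = 0) ∧
        (∀ x ∈ W, ∀ i, ∑ j, lieg g X x i j * ν x j = θ x i) := by
  have near_W₀ : W₀ ∈ 𝓝ˢ S := hW₀.mem_nhdsSet.2 hSW₀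
  obtain ⟨X, hX, hX₀⟩ := exists_sum_lieg_mul_eq (fun p hp i j => hg i j p hp) hdet
    (fun p hp => ⟨hf p hp, .pi fun i => hν i p hp, hSf hp, htrans p hp⟩)
    (fun p hp i => hθ i p hp) (fun p hp => (eventually_nhdsSet_iff_forall.1 near_W₀ p hp).mono hgeo)
  obtain ⟨W, hW, hSW, hWX⟩ := eventually_nhdsSet_iff_exists.1 (hX.and near_W₀)
  exact ⟨W, hW, hSW, fun x hx => (hWX x hx).2, X, fun i x hx => (hWX x hx).1.1 i, hX₀,
    fun x hx => (hWX x hx).1.2⟩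

end

/-- analytic geodesic gauge construction: if `Σ = f⁻¹(0)` is an
analytic hypersurface in the boundary of `M`, `g` and `h` are analytic near `Σ`,
and `ν` is the parallel extension of the unit normal (`∇_ν ν = 0`), then there is
an analytic vector field `X` in a collar neighborhood of `Σ` with `X = 0` on `Σ`
and `(L_X g)(ν,·) = h(ν,·)` there. -/
theorem statement5 {n : ℕ}
    (g h : Pt n → Fin n → Fin n → ℝ) (f : Pt n → ℝ)
    (W₀ : Set (Pt n)) (hW₀ : IsOpen W₀) (hSW0 : f ⁻¹' {(0:ℝ)} ⊆ W₀)
    (hgsym : symT g) (hgpos : posdef g) (hhsym : symT h)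
    (hgan : ∀ i j, AnalyticOnNhd ℝ (fun x => g x i j) W₀)
    (hhan : ∀ i j, AnalyticOnNhd ℝ (fun x => h x i j) W₀)
    (hfan : AnalyticOnNhd ℝ f W₀)
    (hreg : ∀ x ∈ f ⁻¹' {(0:ℝ)}, fderiv ℝ f x ≠ 0)
    -- the unit normal is extended parallelly along itself: `∇_ν ν = 0` near `Σ`
    (hpar : ∀ x ∈ W₀, ∀ i : Fin n, ∑ j, nuV g f x j * cdVec g (nuV g f) x i j = 0) :
    ∃ W : Set (Pt n), IsOpen W ∧ f ⁻¹' {(0:ℝ)} ⊆ W ∧ W ⊆ W₀ ∧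
      ∃ X : Pt n → Fin n → ℝ,
        (∀ i, AnalyticOnNhd ℝ (fun x => X x i) W) ∧
        (∀ x ∈ f ⁻¹' {(0:ℝ)}, ∀ i, X x i = 0) ∧
        (∀ x ∈ W, ∀ i : Fin n,
          ∑ j, lieg g X x i j * nuV g f x j = ∑ j, h x i j * nuV g f x j) := by
  have posDef := posDef_of_posdef hgsym hgpos
  have nuV_analytic := analyticOnNhd_nuV (fun i j => (hgan i j).mono hSW0) (fun x _ => posDef x)
    (hfan.mono hSW0) hreg
  exact statement5_general subset_rfl hW₀ hSW0 (fun i j => (hgan i j).mono hSW0)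
    (fun x _ => (posDef x).det_pos.ne') (hfan.mono hSW0) nuV_analytic
    (fun i => Finset.analyticOnNhd_fun_sum _ fun j _ =>
      ((hhan i j).mono hSW0).mul (nuV_analytic j))
    (fun x hx => fderiv_nuV_ne_zero (posDef x) (hreg x hx)) hpar
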